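/- arXiv:1001.4954 — 2 statements merged into one kernel-verified Lean document; each statement's English description precedes it below -/
import Mathlib

section
/- Let n ≥ 3 be an integer, let c be an integer with 1 ≤ c ≤ n − 1, let i ≥ 1, and let (a,b) = (1,c)·(Φ⁻¹)^i, where Φ⁻¹ = [[−1, −n], [n, n²−1]] acts on row vectors on the right. If r, s are positive integers with r + s = a + b and a·r + b·s − n·a·s ≤ 0, then s ≥ b. -/
/-- Right action of the inverse Coxeter matrix `Φ⁻¹ = [[−1, −n], [n, n²−1]]`
of the `n`-Kronecker quiver on an integer row vector:
`(x,y)·Φ⁻¹ = (n·y − x, (n²−1)·y − n·x)`. -/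
def phiInv (n : ℤ) (p : ℤ × ℤ) : ℤ × ℤ :=
  (n * p.2 - p.1, (n ^ 2 - 1) * p.2 - n * p.1)

/-!
`Φ⁻¹` is an isometry of the Euler form, so `⟨(a,b), (a,b)⟩ = ⟨(1,c), (1,c)⟩ = 1 + c² - n·c`. Since
`r + s = a + b`, the vector `(r,s)` equals `(a,b) + (b - s)·(1,-1)`, whence
`⟨(a,b), (r,s)⟩ = 1 + c² - n·c + (b - s)·⟨(a,b), (1,-1)⟩`. Writing `(a,b) = (x,y)·Φ⁻¹`, one has
`b = n·a - y`, so `⟨(a,b), (1,-1)⟩ = (n+1)·a - b = a + y ≥ n·y ≥ n·c`, because the coordinates grow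
along the orbit. If `b - s` were at least `1`, then `⟨(a,b), (r,s)⟩` would be at least
`1 + c² > 0`.
-/

/-- The Euler form `⟨p, q⟩` of the `n`-Kronecker quiver on dimension vectors. -/
def eulerForm (n : ℤ) (p q : ℤ × ℤ) : ℤ :=
  p.1 * q.1 + p.2 * q.2 - n * p.1 * q.2

section EulerForm

variable (n : ℤ) (p q : ℤ × ℤ)

theorem eulerForm_phiInv : eulerForm n (phiInv n p) (phiInv n q) = eulerForm n p q := by
  simp only [eulerForm, phiInv]
  ring

theorem eulerForm_iterate_phiInv (i : ℕ) :
    eulerForm n ((phiInv n)^[i] p) ((phiInv n)^[i] q) = eulerForm n p q := by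
  induction i with
  | zero => rfl
  | succ i ih => simp only [Function.iterate_succ_apply', eulerForm_phiInv, ih]

variable {n p q}

theorem eulerForm_eq_self_add_of_add_eq (hsum : q.1 + q.2 = p.1 + p.2) :
    eulerForm n p q = eulerForm n p p + (p.2 - q.2) * eulerForm n p (1, -1) := by
  simp only [eulerForm, eq_sub_of_add_eq hsum]
  ring

theorem snd_le_snd_of_eulerForm_nonpos (hsum : q.1 + q.2 = p.1 + p.2)
    (hnonneg : 0 ≤ eulerForm n p (1, -1)) (hpos : 0 < eulerForm n p p + eulerForm n p (1, -1))
    (heuler : eulerForm n p q ≤ 0) : p.2 ≤ q.2 := by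
  by_contra! hlt
  have hmul : eulerForm n p (1, -1) ≤ (p.2 - q.2) * eulerForm n p (1, -1) :=
    le_mul_of_one_le_left hnonneg (by lia)
  linarith [eulerForm_eq_self_add_of_add_eq (n := n) hsum]

end EulerForm

section Growth

theorem snd_phiInv (n : ℤ) (p : ℤ × ℤ) : (phiInv n p).2 = n * (phiInv n p).1 - p.2 := by
  simp only [phiInv]
  ring

theorem eulerForm_phiInv_one_neg_one (n : ℤ) (p : ℤ × ℤ) :
    eulerForm n (phiInv n p) (1, -1) = (phiInv n p).1 + p.2 := by
  rw [eulerForm, snd_phiInv]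
  ring

theorem le_mul_sub_of_le {n x y : ℤ} (hn : 2 ≤ n) (hy : 0 ≤ y) (hxy : x ≤ y) :
    y ≤ n * y - x := by
  linarith [mul_le_mul_of_nonneg_right hn hy]

variable {n : ℤ} {p : ℤ × ℤ}

theorem snd_le_fst_phiInv (hn : 2 ≤ n) (hp : 0 ≤ p.2) (hle : p.1 ≤ p.2) :
    p.2 ≤ (phiInv n p).1 :=
  le_mul_sub_of_le hn hp hle

theorem fst_phiInv_le_snd_phiInv (hn : 2 ≤ n) (hp : 0 ≤ p.2) (hle : p.1 ≤ p.2) :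
    (phiInv n p).1 ≤ (phiInv n p).2 := by
  have hfst := snd_le_fst_phiInv hn hp hle
  rw [snd_phiInv]
  exact le_mul_sub_of_le hn (hp.trans hfst) hfst

theorem iterate_phiInv_fst_le_snd_and_snd_le_snd (hn : 2 ≤ n) (hp : 0 ≤ p.2)
    (hle : p.1 ≤ p.2) (i : ℕ) :
    ((phiInv n)^[i] p).1 ≤ ((phiInv n)^[i] p).2 ∧ p.2 ≤ ((phiInv n)^[i] p).2 := by
  induction i with
  | zero => exact ⟨hle, le_rfl⟩
  | succ i ih =>
    obtain ⟨hle_i, hgrow⟩ := ih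
    have hp_i := hp.trans hgrow
    have hstep := fst_phiInv_le_snd_phiInv hn hp_i hle_i
    rw [Function.iterate_succ_apply']
    exact ⟨hstep, hgrow.trans ((snd_le_fst_phiInv hn hp_i hle_i).trans hstep)⟩

theorem mul_snd_le_eulerForm_iterate_succ_phiInv (hn : 2 ≤ n) (hp : 0 ≤ p.2)
    (hle : p.1 ≤ p.2) (i : ℕ) :
    n * p.2 ≤ eulerForm n ((phiInv n)^[i + 1] p) (1, -1) := by
  obtain ⟨hle_i, hgrow⟩ := iterate_phiInv_fst_le_snd_and_snd_le_snd hn hp hle i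
  rw [Function.iterate_succ_apply']
  set u := (phiInv n)^[i] p
  calc
    n * p.2 ≤ n * u.2 := by gcongr
    _ ≤ (phiInv n u).1 + u.2 := by simp only [phiInv]; linarith
    _ = eulerForm n (phiInv n u) (1, -1) := (eulerForm_phiInv_one_neg_one n u).symm

end Growth

theorem stmt4_general (n c : ℤ) (hn : 2 ≤ n) (hc : 1 ≤ c)
    (i : ℕ) (hi : 1 ≤ i) (a b : ℤ) (hab : (a, b) = (phiInv n)^[i] (1, c))
    (r s : ℤ) (hsum : r + s = a + b) (heuler : a * r + b * s - n * a * s ≤ 0) :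
    b ≤ s := by
  obtain ⟨j, rfl⟩ := Nat.exists_eq_add_of_le' hi
  have hself : eulerForm n (a, b) (a, b) = 1 + c ^ 2 - n * c := by
    rw [hab, eulerForm_iterate_phiInv, eulerForm]
    ring
  have hlower : n * c ≤ eulerForm n (a, b) (1, -1) := by
    rw [hab]
    exact mul_snd_le_eulerForm_iterate_succ_phiInv hn (zero_le_one.trans hc) hc j
  have hnonneg : 0 ≤ eulerForm n (a, b) (1, -1) := (by positivity : 0 ≤ n * c).trans hlower
  have hpos : 0 < eulerForm n (a, b) (a, b) + eulerForm n (a, b) (1, -1) := by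
    linarith [sq_nonneg c]
  exact snd_le_snd_of_eulerForm_nonpos (q := (r, s)) hsum hnonneg hpos heuler

/-- For `n ≥ 3`, `1 ≤ c ≤ n−1`, `i ≥ 1` and
`(a,b) = (1,c)·(Φ⁻¹)^i`: if `r, s` are positive integers with `r + s = a + b`
and `a·r + b·s − n·a·s ≤ 0`, then `s ≥ b`. -/
theorem stmt4 (n c : ℤ) (hn : 3 ≤ n) (hc1 : 1 ≤ c) (hc2 : c ≤ n - 1)
    (i : ℕ) (hi : 1 ≤ i) (a b : ℤ) (hab : (a, b) = (phiInv n)^[i] (1, c))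
    (r s : ℤ) (hr : 0 < r) (hs : 0 < s) (hsum : r + s = a + b)
    (heuler : a * r + b * s - n * a * s ≤ 0) :
    b ≤ s :=
  stmt4_general n c (by linarith) hc1 i hi a b hab r s hsum heuler
end

section
/- Let n ≥ 3 be an integer, let c be an integer with 1 ≤ c ≤ n − 1, let i ≥ 1, and let (a,b) = (1,c)·(Φ⁻¹)^i, where Φ⁻¹ = [[−1, −n], [n, n²−1]] acts on row vectors on the right. Then for every integer t with 1 ≤ t ≤ a − 1, the pair (a − t, b + t) is not an imaginary root, i.e., q(a − t, b + t) ≥ 0. -/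
/-!
Moving a vector `(x, y)` to `(x - t, y + t)` raises the Tits form `q` by `(n + 2) t (t + (y - x))`,
so `q` after the move is controlled by `q (x, y)` and the gap `y - x`. The Coxeter action preserves
`q` and, on the cone `0 ≤ x ≤ y`, does not shrink the gap. Hence moving an iterate of `(1, c)` by
`t ≥ 1` gives a value of `q` at least as large as moving `(1, c)` itself by `1`, which is
`q (0, c + 1) = (c + 1) ^ 2`.
-/

section TitsForm

variable {R : Type*} [CommRing R]

/-- The Tits quadratic form `x² + y² - n x y` of the `n`-Kronecker quiver, the form whose negative
values detect imaginary roots. The number of arrows `n` is an element of the coefficient ring. -/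
def titsForm (n : R) (p : R × R) : R :=
  p.1 ^ 2 + p.2 ^ 2 - n * p.1 * p.2

lemma titsForm_zero_left (n y : R) : titsForm n (0, y) = y ^ 2 := by
  simp [titsForm]

lemma titsForm_sub_add (n t : R) (p : R × R) :
    titsForm n (p.1 - t, p.2 + t) =
      titsForm n p + (n + 2) * (t * (t + (p.2 - p.1))) := by
  simp only [titsForm]
  ring

lemma titsForm_sub_add_le_titsForm_sub_add [PartialOrder R] [IsOrderedRing R]
    {n s t : R} {p p' : R × R} (hn : 0 ≤ n + 2) (hs : 0 ≤ s) (hst : s ≤ t)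
    (hp : p.1 ≤ p.2) (hgap : p.2 - p.1 ≤ p'.2 - p'.1) (hq : titsForm n p ≤ titsForm n p') :
    titsForm n (p.1 - s, p.2 + s) ≤ titsForm n (p'.1 - t, p'.2 + t) := by
  have hmul : s * (s + (p.2 - p.1)) ≤ t * (t + (p'.2 - p'.1)) :=
    mul_le_mul hst (add_le_add hst hgap) (add_nonneg hs (sub_nonneg.mpr hp)) (hs.trans hst)
  rw [titsForm_sub_add, titsForm_sub_add]
  exact add_le_add hq (mul_le_mul_of_nonneg_left hmul hn)

end TitsForm

section CoxeterAction

variable {n : ℤ} {p : ℤ × ℤ}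

lemma titsForm_phiInv (n : ℤ) (p : ℤ × ℤ) : titsForm n (phiInv n p) = titsForm n p := by
  simp only [titsForm, phiInv]
  ring

lemma titsForm_phiInv_iterate (n : ℤ) (p : ℤ × ℤ) (i : ℕ) :
    titsForm n ((phiInv n)^[i] p) = titsForm n p := by
  induction i with
  | zero => rfl
  | succ k ih => rw [Function.iterate_succ_apply', titsForm_phiInv, ih]

lemma phiInv_fst_nonneg (hn : 1 ≤ n) (hp₀ : 0 ≤ p.1) (hp : p.1 ≤ p.2) :
    0 ≤ (phiInv n p).1 := by
  have hle : p.2 ≤ n * p.2 := le_mul_of_one_le_left (hp₀.trans hp) hn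
  exact sub_nonneg.mpr (hp.trans hle)

lemma sub_le_phiInv_sub (hn : 2 ≤ n) (hp₀ : 0 ≤ p.1) (hp : p.1 ≤ p.2) :
    p.2 - p.1 ≤ (phiInv n p).2 - (phiInv n p).1 := by
  have hincr : (phiInv n p).2 - (phiInv n p).1 =
      p.2 - p.1 + (n - 2) * (n * p.2 + (p.2 - p.1)) := by
    simp only [phiInv]
    ring
  have hsnd : 0 ≤ n * p.2 := mul_nonneg (by linarith) (hp₀.trans hp)
  rw [hincr]
  exact le_add_of_nonneg_right <|
    mul_nonneg (sub_nonneg.mpr hn) (add_nonneg hsnd (sub_nonneg.mpr hp))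

lemma sub_le_phiInv_iterate_sub (hn : 2 ≤ n) (hp₀ : 0 ≤ p.1) (hp : p.1 ≤ p.2) (i : ℕ) :
    p.2 - p.1 ≤ ((phiInv n)^[i] p).2 - ((phiInv n)^[i] p).1 := by
  induction i generalizing p with
  | zero => rfl
  | succ k ih =>
    have hgap := sub_le_phiInv_sub hn hp₀ hp
    have hfst : 0 ≤ (phiInv n p).1 := phiInv_fst_nonneg (by linarith) hp₀ hp
    have hle : (phiInv n p).1 ≤ (phiInv n p).2 := by linarith
    rw [Function.iterate_succ_apply]
    exact hgap.trans (ih hfst hle)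

lemma titsForm_sub_add_le_titsForm_phiInv_iterate_sub_add {s t : ℤ} (hn : 2 ≤ n)
    (hp₀ : 0 ≤ p.1) (hp : p.1 ≤ p.2) (hs : 0 ≤ s) (hst : s ≤ t) (i : ℕ) :
    titsForm n (p.1 - s, p.2 + s) ≤
      titsForm n (((phiInv n)^[i] p).1 - t, ((phiInv n)^[i] p).2 + t) :=
  titsForm_sub_add_le_titsForm_sub_add (by linarith) hs hst hp
    (sub_le_phiInv_iterate_sub hn hp₀ hp i) (titsForm_phiInv_iterate n p i).ge

end CoxeterAction

theorem stmt6_general {n c : ℤ} (hn : 2 ≤ n) (hc : 1 ≤ c) {i : ℕ} {a b : ℤ}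
    (hab : (a, b) = (phiInv n)^[i] (1, c)) {t : ℤ} (ht : 1 ≤ t) :
    (c + 1) ^ 2 ≤ titsForm n (a - t, b + t) := by
  have hshift := titsForm_sub_add_le_titsForm_phiInv_iterate_sub_add (p := (1, c)) hn
    zero_le_one hc zero_le_one ht i
  rwa [← hab, sub_self, titsForm_zero_left] at hshift

/-- For `n ≥ 3`, `1 ≤ c ≤ n−1`, `i ≥ 1` and
`(a,b) = (1,c)·(Φ⁻¹)^i`: for every `1 ≤ t ≤ a − 1`, the pair `(a−t, b+t)`
is not an imaginary root, i.e. `q(a−t, b+t) ≥ 0`. -/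
theorem stmt6 (n c : ℤ) (hn : 3 ≤ n) (hc1 : 1 ≤ c) (hc2 : c ≤ n - 1)
    (i : ℕ) (hi : 1 ≤ i) (a b : ℤ) (hab : (a, b) = (phiInv n)^[i] (1, c))
    (t : ℤ) (ht1 : 1 ≤ t) (ht2 : t ≤ a - 1) :
    0 ≤ (a - t) ^ 2 + (b + t) ^ 2 - n * (a - t) * (b + t) :=
  (sq_nonneg (c + 1)).trans (stmt6_general (by linarith) hc1 hab ht1)
end
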